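/- Let γ > 0, Z(t) = e^{γt}, Z_η(t) = e^{(1−η)γt} with η ∈ [0,1), 0 ≤ b < 3, c₁ ≥ 1, and t₀ ≥ 0. Suppose symmetric matrix-valued functions g^{ab}(t), k^{ab}(t) on [t₀,T] are continuous and satisfy, for all t ∈ [t₀,T] and p ∈ ℝ³: (1/c₁)|p|² ≤ Z(t)² g^{ab}(t)p_a p_b ≤ c₁|p|², max|k^{ab}(t)| ≤ c₁ Z(t)^{−2}, H(t) ≥ γ and F(t) ≤ η²/4. Let f₀ ≥ 0 with ‖f₀‖_{L^∞_m} ≤ B for some m ≥ 0, and let (f_n)_{n≥0} be the standard iteration for the weighted Boltzmann equation: f_0(t,p) = f₀(p), and f_{n+1} is the (nonnegative, continuous) solution of ∂_t f_{n+1}(t,p) + λ_η(t,p) f_{n+1}(t,p) = (det g(t))^{−1/2} ∫_{ℝ³}∫_{𝕊²} (h^{1−b}√s/(p⁰q⁰)) ( f_n(t,p') f_n(t,q') − f_{n+1}(t,p) f_n(t,q) ) w(t,q)^{−1} dω dq with f_{n+1}(t₀,·) = f₀. Then for every C₂ > 1 there exists T₁ ∈ (t₀,T] such that sup_{t₀ ≤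 s ≤ T₁} ‖f_n(s)‖_{L^∞_m} ≤ C₂ B for all n. -/

import Mathlib

open Matrix Real MeasureTheory Set

noncomputable section

/-- 3×3 real matrices. -/
abbrev Mat3 := Matrix (Fin 3) (Fin 3) ℝ
/-- Momentum vectors in ℝ³. -/
abbrev V3 := Fin 3 → ℝ

/-- The quadratic form `g^{ab} p_a p_b = pᵀ G p`. -/
def quadG (G : Mat3) (p : V3) : ℝ := p ⬝ᵥ G *ᵥ p

/-- The quadratic form `k^{ab} p_a p_b`. -/
def quadK (K : Mat3) (p : V3) : ℝ := p ⬝ᵥ K *ᵥ p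

/-- Squared Euclidean norm `|p|²`. -/
def enorm2 (p : V3) : ℝ := ∑ i, p i ^ 2

/-- The Japanese bracket `⟨p⟩ = √(1+|p|²)`. -/
def jap (p : V3) : ℝ := Real.sqrt (1 + enorm2 p)

/-- The particle energy `p⁰ = √(1 + g^{ab} p_a p_b)`. -/
def p0 (G : Mat3) (p : V3) : ℝ := Real.sqrt (1 + quadG G p)

/-- The relative momentum `h = √(−(p⁰−q⁰)² + g^{ab}(p_a−q_a)(p_b−q_b))`. -/
def hrel (G : Mat3) (p q : V3) : ℝ :=
  Real.sqrt (-(p0 G p - p0 G q) ^ 2 + quadG G (p - q))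

/-- `s = (p⁰+q⁰)² − g^{ab}(p_a+q_a)(p_b+q_b)`. -/
def sCM (G : Mat3) (p q : V3) : ℝ :=
  (p0 G p + p0 G q) ^ 2 - quadG G (p + q)

/-- `Z(t) = e^{γt}`. -/
def Zfun (γ t : ℝ) : ℝ := Real.exp (γ * t)

/-- `Z_η(t) = e^{(1−η)γt}`. -/
def Zeta (γ η t : ℝ) : ℝ := Real.exp ((1 - η) * γ * t)

/-- The inverse weight `w(q)⁻¹ = exp(−Z_η(q⁰−1))`. -/
def winv (G : Mat3) (Zη : ℝ) (q : V3) : ℝ := Real.exp (-(Zη * (p0 G q - 1)))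

/-- The explicit lower-triangular orthonormal frame `(eⁱ_a)` of the metric `G = (g^{ab})`,
satisfying `eⁱ_a eʲ_b g^{ab} = δⁱʲ`. -/
def frameE (G : Mat3) : Mat3 :=
  !![1 / Real.sqrt (G 0 0), 0, 0;
     -(G 0 1) / Real.sqrt (G 0 0 * (G 0 0 * G 1 1 - G 0 1 ^ 2)),
     G 0 0 / Real.sqrt (G 0 0 * (G 0 0 * G 1 1 - G 0 1 ^ 2)), 0;
     (G 0 1 * G 1 2 - G 0 2 * G 1 1) / Real.sqrt ((G 0 0 * G 1 1 - G 0 1 ^ 2) * G.det),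
     (-(G 0 0) * G 1 2 + G 0 1 * G 0 2) / Real.sqrt ((G 0 0 * G 1 1 - G 0 1 ^ 2) * G.det),
     (G 0 0 * G 1 1 - G 0 1 ^ 2) / Real.sqrt ((G 0 0 * G 1 1 - G 0 1 ^ 2) * G.det)]

/-- `ω_i eⁱ_a`, i.e. the vector `(e⁻¹)ᵀ ω`. -/
def eoV (G : Mat3) (ω : V3) : V3 := (frameE G)ᵀ *ᵥ ω

/-- The coefficient in the relativistic parametrization of post-collision momenta:
`a = −q⁰(n^a ω_i eⁱ_a)/√s + q^a ω_i eⁱ_a + (n^a ω_i eⁱ_a)(n_b q^b)/(√s(n⁰+√s))`,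
where `n = p + q` and `n⁰ = p⁰ + q⁰`. -/
def aCoef (G : Mat3) (p q ω : V3) : ℝ :=
  -(p0 G q) * ((G *ᵥ (p + q)) ⬝ᵥ eoV G ω) / Real.sqrt (sCM G p q)
    + (G *ᵥ q) ⬝ᵥ eoV G ω
    + ((G *ᵥ (p + q)) ⬝ᵥ eoV G ω) * ((p + q) ⬝ᵥ G *ᵥ q)
      / (Real.sqrt (sCM G p q) * (p0 G p + p0 G q + Real.sqrt (sCM G p q)))

/-- The direction vector `ω_j eʲ_d + (n^c ω_j eʲ_c) n_d/(√s(n⁰+√s))`. -/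
def dirVec (G : Mat3) (p q ω : V3) : V3 := fun d =>
  eoV G ω d + ((G *ᵥ (p + q)) ⬝ᵥ eoV G ω) * (p + q) d
    / (Real.sqrt (sCM G p q) * (p0 G p + p0 G q + Real.sqrt (sCM G p q)))

/-- The post-collision momentum `p'`. -/
def pPost (G : Mat3) (p q ω : V3) : V3 :=
  fun d => p d + 2 * aCoef G p q ω * dirVec G p q ω d

/-- The post-collision momentum `q'`. -/
def qPost (G : Mat3) (p q ω : V3) : V3 :=
  fun d => q d - 2 * aCoef G p q ω * dirVec G p q ω d

/-- The unit sphere `𝕊² ⊂ ℝ³`. -/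
abbrev Sph := Metric.sphere (0 : EuclideanSpace ℝ (Fin 3)) 1

/-- The surface measure on the unit sphere. -/
def sphMeasure : Measure Sph := (volume : Measure (EuclideanSpace ℝ (Fin 3))).toSphere

/-- A point of the sphere, viewed as a vector of `ℝ³`. -/
def sphV (ω : Sph) : V3 := fun i => (ω : EuclideanSpace ℝ (Fin 3)) i

/-- The collision kernel `h^{1−b} √s/(p⁰ q⁰)` for the soft potential `σ(h,ω) = h^{−b}`. -/
def collKer (G : Mat3) (b : ℝ) (p q : V3) : ℝ :=
  hrel G p q ^ (1 - b) * Real.sqrt (sCM G p q) / (p0 G p * p0 G q)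

/-- The collision operator `Γ(f,f)` of the weighted Boltzmann equation. -/
def GammaOp (G : Mat3) (Zη b : ℝ) (f : V3 → ℝ) (p : V3) : ℝ :=
  Real.sqrt G.det * ∫ q : V3,
    (∫ ω : Sph, collKer G b p q *
        (f (pPost G p q (sphV ω)) * f (qPost G p q (sphV ω)) - f p * f q) ∂sphMeasure)
      * winv G Zη q

/-- The mixed collision operator used in the iteration for the Boltzmann equation, where
the loss term contains the value `fval` of the next iterate at `p`. -/
def GammaIter (G : Mat3) (Zη b : ℝ) (fn : V3 → ℝ) (fval : ℝ) (p : V3) : ℝ :=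
  Real.sqrt G.det * ∫ q : V3,
    (∫ ω : Sph, collKer G b p q *
        (fn (pPost G p q (sphV ω)) * fn (qPost G p q (sphV ω)) - fval * fn q) ∂sphMeasure)
      * winv G Zη q

/-- The energy density `ρ = (det g)^{−1/2} ∫ f p⁰ w⁻¹ dp`. -/
def rhoT (G : Mat3) (Zη : ℝ) (f : V3 → ℝ) : ℝ :=
  Real.sqrt G.det * ∫ p : V3, f p * p0 G p * winv G Zη p

/-- The stress `S^{ab} = (det g)^{−1/2} ∫ f p^a p^b/p⁰ w⁻¹ dp`. -/
def SupT (G : Mat3) (Zη : ℝ) (f : V3 → ℝ) : Mat3 :=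
  Matrix.of fun a b =>
    Real.sqrt G.det * ∫ p : V3, f p * ((G *ᵥ p) a * (G *ᵥ p) b / p0 G p) * winv G Zη p

/-- The trace `S = g_{ab}S^{ab} = (det g)^{−1/2} ∫ f g^{ab}p_ap_b/p⁰ w⁻¹ dp`. -/
def StrT (G : Mat3) (Zη : ℝ) (f : V3 → ℝ) : ℝ :=
  Real.sqrt G.det * ∫ p : V3, f p * (quadG G p / p0 G p) * winv G Zη p

/-- The trace `k = g_{ab} k^{ab}`. -/
def trK (G K : Mat3) : ℝ := ∑ a, ∑ b, G⁻¹ a b * K a b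

/-- The Hubble scalar `H = (1/3) g_{ab} k^{ab}`. -/
def Hub (G K : Mat3) : ℝ := (1 / 3) * trK G K

/-- The shear `σ^{ab} = k^{ab} − H g^{ab}`. -/
def shearUp (G K : Mat3) : Mat3 := K - Hub G K • G

/-- `σ_{ab} σ^{ab}` with `σ_{ab} = g_{ac}g_{bd}σ^{cd}`. -/
def shearSq (G K : Mat3) : ℝ :=
  ∑ a, ∑ b, (G⁻¹ * shearUp G K * G⁻¹) a b * shearUp G K a b

/-- The shear variable `F = σ_{ab}σ^{ab}/(4H²)`. -/
def Fvar (G K : Mat3) : ℝ := shearSq G K / (4 * Hub G K ^ 2)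

/-- `λ_η(p) = −((1−η)γ(p⁰−1) − k^{ab}p_a p_b/p⁰) Z_η`. -/
def lamEta (G K : Mat3) (γ η Zη : ℝ) (p : V3) : ℝ :=
  -((1 - η) * γ * (p0 G p - 1) - quadK K p / p0 G p) * Zη

/-- The right hand side of the evolution equation for `k^{ab}`:
`−2k^a_c k^{bc} − k k^{ab} + S^{ab} + (1/2)(ρ−S)g^{ab} + Λ g^{ab}`. -/
def kEvol (Λ Zη : ℝ) (G K : Mat3) (f : V3 → ℝ) : Mat3 :=
  (-2 : ℝ) • (K * G⁻¹ * K) - trK G K • K + SupT G Zη f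
    + ((1 / 2) * (rhoT G Zη f - StrT G Zη f)) • G + Λ • G

/-- The Hamiltonian constraint `−k_{ab}k^{ab} + k² = 2ρ + 2Λ`. -/
def ConstraintEq (Λ ρ : ℝ) (G K : Mat3) : Prop :=
  -(∑ a, ∑ b, (G⁻¹ * K * G⁻¹) a b * K a b) + trK G K ^ 2 = 2 * ρ + 2 * Λ

/-!
The map `(p, q) ↦ (p', q')` is a Lorentz reflection of the two four-momenta, hence it preserves
the mass shell and the total energy. Therefore `p⁰ ≤ p'⁰ + q'⁰ ≤ 2 p'⁰ q'⁰`, so that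
`⟨p⟩ᵐ f(p') f(q')` is at most a constant times `‖f‖²` in the weighted norm. The collision kernel
is at most `5 + 2 / g^{ab}(p_a - q_a)(p_b - q_b)`, whose product with `w⁻¹` has an integral in `q`
that is bounded uniformly in `p` and in `t`, so the weighted gain term is at most `L ‖f_n‖²`.
The bound on `F` says that the shear is at most `η H` relative to `g^{ab}`, which makes `λ_η`
nonnegative. The damping and loss terms can thus be dropped, and `‖f_{n+1}(t)‖` is at most
`B + L (C₂ B)² (t - t₀)` as long as `‖f_n‖ ≤ C₂ B`.
-/

section QuadraticForm

variable {ι : Type*} {G : Matrix ι ι ℝ}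

theorem isSymm_of_posSemidef (hG : G.PosSemidef) : G.IsSymm :=
  isHermitian_iff_isSymm.mp hG.isHermitian

variable [Fintype ι]

theorem dotProduct_mulVec_comm_of_isSymm (hG : G.IsSymm) (x y : ι → ℝ) :
    x ⬝ᵥ G *ᵥ y = y ⬝ᵥ G *ᵥ x := by
  rw [← dotProduct_transpose_mulVec, hG.eq]

theorem quadratic_add_smul (hG : G.IsSymm) (x y : ι → ℝ) (r : ℝ) :
    (x + r • y) ⬝ᵥ G *ᵥ (x + r • y)
      = x ⬝ᵥ G *ᵥ x + 2 * r * (x ⬝ᵥ G *ᵥ y) + r ^ 2 * (y ⬝ᵥ G *ᵥ y) := by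
  simp only [mulVec_add, mulVec_smul, add_dotProduct, dotProduct_add, smul_dotProduct,
    dotProduct_smul, smul_eq_mul, dotProduct_mulVec_comm_of_isSymm hG y x]
  ring

theorem sq_dotProduct_mulVec_le (hG : G.PosSemidef) (x y : ι → ℝ) :
    (x ⬝ᵥ G *ᵥ y) ^ 2 ≤ (x ⬝ᵥ G *ᵥ x) * (y ⬝ᵥ G *ᵥ y) := by
  have h : discrim (y ⬝ᵥ G *ᵥ y) (2 * (x ⬝ᵥ G *ᵥ y)) (x ⬝ᵥ G *ᵥ x) ≤ 0 := by
    refine discrim_le_zero fun r => ?_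
    have := hG.dotProduct_mulVec_nonneg (x + r • y)
    rw [star_trivial, quadratic_add_smul (isSymm_of_posSemidef hG)] at this
    linarith
  rw [discrim] at h
  linarith

end QuadraticForm

section MassShell

variable {G : Mat3}

theorem quadG_nonneg (hG : G.PosSemidef) (p : V3) : 0 ≤ quadG G p :=
  hG.dotProduct_mulVec_nonneg p

theorem quadG_add_smul (hG : G.IsSymm) (p q : V3) (r : ℝ) :
    quadG G (p + r • q) = quadG G p + 2 * r * (p ⬝ᵥ G *ᵥ q) + r ^ 2 * quadG G q :=
  quadratic_add_smul hG p q r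

theorem quadG_add (hG : G.IsSymm) (p q : V3) :
    quadG G (p + q) = quadG G p + 2 * (p ⬝ᵥ G *ᵥ q) + quadG G q := by
  simpa using quadG_add_smul hG p q 1

theorem quadG_sub (hG : G.IsSymm) (p q : V3) :
    quadG G (p - q) = quadG G p - 2 * (p ⬝ᵥ G *ᵥ q) + quadG G q := by
  simpa [← sub_eq_add_neg] using quadG_add_smul hG p q (-1)

theorem p0_sq (hG : G.PosSemidef) (p : V3) : p0 G p ^ 2 = 1 + quadG G p :=
  Real.sq_sqrt (by linarith [quadG_nonneg hG p])

theorem one_le_p0 (hG : G.PosSemidef) (p : V3) : 1 ≤ p0 G p :=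
  Real.one_le_sqrt.mpr (by linarith [quadG_nonneg hG p])

theorem p0_pos (hG : G.PosSemidef) (p : V3) : 0 < p0 G p :=
  one_pos.trans_le (one_le_p0 hG p)

theorem one_add_abs_dotProduct_le_p0_mul_p0 (hG : G.PosSemidef) (p q : V3) :
    1 + |p ⬝ᵥ G *ᵥ q| ≤ p0 G p * p0 G q := by
  have hpq : 0 ≤ p0 G p * p0 G q := (mul_pos (p0_pos hG p) (p0_pos hG q)).le
  refine le_of_sq_le_sq ?_ hpq
  have hCS : |p ⬝ᵥ G *ᵥ q| ^ 2 ≤ quadG G p * quadG G q := by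
    rw [sq_abs]
    exact sq_dotProduct_mulVec_le hG p q
  have hAMGM : 2 * |p ⬝ᵥ G *ᵥ q| ≤ quadG G p + quadG G q :=
    le_of_sq_le_sq (by nlinarith [sq_nonneg (quadG G p - quadG G q)])
      (add_nonneg (quadG_nonneg hG p) (quadG_nonneg hG q))
  rw [mul_pow, p0_sq hG, p0_sq hG]
  linarith

theorem sCM_eq (hG : G.PosSemidef) (p q : V3) :
    sCM G p q = 2 + 2 * (p0 G p * p0 G q - p ⬝ᵥ G *ᵥ q) := by
  rw [sCM, quadG_add (isSymm_of_posSemidef hG)]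
  linear_combination p0_sq hG p + p0_sq hG q

theorem four_le_sCM (hG : G.PosSemidef) (p q : V3) : 4 ≤ sCM G p q := by
  rw [sCM_eq hG]
  linarith [one_add_abs_dotProduct_le_p0_mul_p0 hG p q, le_abs_self (p ⬝ᵥ G *ᵥ q)]

theorem sCM_le (hG : G.PosSemidef) (p q : V3) : sCM G p q ≤ 4 * (p0 G p * p0 G q) := by
  rw [sCM_eq hG]
  linarith [one_add_abs_dotProduct_le_p0_mul_p0 hG p q, neg_abs_le (p ⬝ᵥ G *ᵥ q)]

theorem hrel_sq (hG : G.PosSemidef) (p q : V3) : hrel G p q ^ 2 = sCM G p q - 4 := by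
  have h : -(p0 G p - p0 G q) ^ 2 + quadG G (p - q) = sCM G p q - 4 := by
    rw [sCM_eq hG, quadG_sub (isSymm_of_posSemidef hG)]
    linear_combination -p0_sq hG p - p0_sq hG q
  rw [hrel, h, Real.sq_sqrt (by linarith [four_le_sCM hG p q])]

theorem quadG_sub_le (hG : G.PosSemidef) (p q : V3) :
    quadG G (p - q) ≤ hrel G p q ^ 2 * (p0 G p * p0 G q) := by
  have hCS : (p ⬝ᵥ G *ᵥ q) ^ 2 ≤ quadG G p * quadG G q := sq_dotProduct_mulVec_le hG p q
  have hprod : (p0 G p * p0 G q) ^ 2 = (1 + quadG G p) * (1 + quadG G q) := by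
    rw [mul_pow, p0_sq hG, p0_sq hG]
  rw [hrel_sq hG, sCM_eq hG, quadG_sub (isSymm_of_posSemidef hG)]
  nlinarith [sq_nonneg (p0 G p * p0 G q - 1 - p ⬝ᵥ G *ᵥ q)]

end MassShell

section Frame

variable {G : Mat3}

theorem leadingMinor_two_pos (hG : G.PosDef) : 0 < G 0 0 * G 1 1 - G 0 1 ^ 2 := by
  have hinj : Function.Injective ![(0 : Fin 3), 1] := by decide
  have h := (hG.submatrix hinj).det_pos
  rw [det_fin_two] at h
  simpa [(isSymm_of_posSemidef hG.posSemidef).apply 0 1, sq] using h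

theorem frameE_mul_mul_transpose (hG : G.PosDef) : frameE G * G * (frameE G)ᵀ = 1 := by
  have hs := isSymm_of_posSemidef hG.posSemidef
  have ha : 0 < G 0 0 := hG.diag_pos
  have hD := leadingMinor_two_pos hG
  have hdet := hG.det_pos
  have h₁ := Real.sq_sqrt ha.le
  have h₂ := Real.sq_sqrt (mul_pos ha hD).le
  have h₃ := Real.sq_sqrt (mul_pos hD hdet).le
  have h₁' := Real.sqrt_ne_zero'.mpr ha
  have h₂' := Real.sqrt_ne_zero'.mpr (mul_pos ha hD)
  have h₃' := Real.sqrt_ne_zero'.mpr (mul_pos hD hdet)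
  have hdet_eq : G.det = G 0 0 * G 1 1 * G 2 2 - G 0 0 * G 1 2 ^ 2 - G 0 1 ^ 2 * G 2 2
      + 2 * G 0 1 * G 0 2 * G 1 2 - G 0 2 ^ 2 * G 1 1 := by
    rw [det_fin_three, hs.apply 0 1, hs.apply 0 2, hs.apply 1 2]
    ring
  rw [frameE]
  generalize √(G 0 0) = e₁ at *
  generalize √(G 0 0 * (G 0 0 * G 1 1 - G 0 1 ^ 2)) = e₂ at *
  generalize √((G 0 0 * G 1 1 - G 0 1 ^ 2) * G.det) = e₃ at *
  rw [hdet_eq] at h₃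
  ext i j
  fin_cases i <;> fin_cases j <;>
    simp [mul_apply, vecMul, dotProduct, Fin.sum_univ_three, hs.apply 0 1, hs.apply 0 2,
      hs.apply 1 2] <;>
    field_simp <;> grind

theorem quadG_eoV (hG : G.PosDef) (ω : V3) : quadG G (eoV G ω) = enorm2 ω := by
  have h : frameE G *ᵥ G *ᵥ (frameE G)ᵀ *ᵥ ω = ω := by
    rw [mulVec_mulVec, mulVec_mulVec, frameE_mul_mul_transpose hG, one_mulVec]
  rw [quadG, eoV, mulVec_transpose, ← dotProduct_mulVec, ← mulVec_transpose, h]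
  simp [dotProduct, enorm2, sq]

end Frame

section Collision

variable {G : Mat3}

-- `(τ, d)` is a unit spacelike four-vector, and the Lorentz reflection along it preserves the
-- mass shell.
theorem p0_sub_smul_reflection (hG : G.PosSemidef) {d : V3} {τ : ℝ} (hd : quadG G d = 1 + τ ^ 2)
    (p : V3) :
    p0 G (p - (2 * (p ⬝ᵥ G *ᵥ d - p0 G p * τ)) • d)
      = p0 G p - 2 * (p ⬝ᵥ G *ᵥ d - p0 G p * τ) * τ := by
  have hP := p0_sq hG p
  have hsq : 1 + quadG G (p - (2 * (p ⬝ᵥ G *ᵥ d - p0 G p * τ)) • d)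
      = (p0 G p - 2 * (p ⬝ᵥ G *ᵥ d - p0 G p * τ) * τ) ^ 2 := by
    rw [sub_eq_add_neg, ← neg_smul, quadG_add_smul (isSymm_of_posSemidef hG), hd]
    linear_combination -hP
  have hCS : (2 * τ * (p ⬝ᵥ G *ᵥ d)) ^ 2 ≤ (p0 G p * (1 + 2 * τ ^ 2)) ^ 2 :=
    calc (2 * τ * (p ⬝ᵥ G *ᵥ d)) ^ 2 = 4 * τ ^ 2 * (p ⬝ᵥ G *ᵥ d) ^ 2 := by ring
      _ ≤ 4 * τ ^ 2 * (quadG G p * quadG G d) := by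
        gcongr
        exact sq_dotProduct_mulVec_le hG p d
      _ = 4 * τ ^ 2 * (1 + τ ^ 2) * (p0 G p ^ 2 - 1) := by rw [hd, hP]; ring
      _ ≤ (p0 G p * (1 + 2 * τ ^ 2)) ^ 2 := by nlinarith [sq_nonneg (p0 G p), sq_nonneg τ]
  have hle := le_of_sq_le_sq hCS (mul_nonneg (p0_pos hG p).le (by positivity))
  rw [p0, hsq, Real.sqrt_sq (by linarith)]

/-- The time component of the spacelike four-vector whose spatial part is `dirVec G p q ω`.
The collision `(p, q) ↦ (p', q')` is the Lorentz reflection along this four-vector. -/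
def dirTime (G : Mat3) (p q ω : V3) : ℝ :=
  ((G *ᵥ (p + q)) ⬝ᵥ eoV G ω) / √(sCM G p q)

theorem dirVec_eq (G : Mat3) (p q ω : V3) :
    dirVec G p q ω = eoV G ω
      + (dirTime G p q ω / (p0 G p + p0 G q + √(sCM G p q))) • (p + q) := by
  ext i
  simp only [dirVec, dirTime, Pi.add_apply, Pi.smul_apply, smul_eq_mul, div_div]
  ring

theorem dotProduct_dirVec (G : Mat3) (p q ω x : V3) :
    x ⬝ᵥ G *ᵥ dirVec G p q ω = x ⬝ᵥ G *ᵥ eoV G ω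
      + dirTime G p q ω / (p0 G p + p0 G q + √(sCM G p q)) * (x ⬝ᵥ G *ᵥ (p + q)) := by
  rw [dirVec_eq, mulVec_add, mulVec_smul, dotProduct_add, dotProduct_smul, smul_eq_mul]

theorem sqrt_sCM_pos (hG : G.PosSemidef) (p q : V3) : 0 < √(sCM G p q) :=
  Real.sqrt_pos.mpr (by linarith [four_le_sCM hG p q])

theorem quadG_add_eq_sub_sq (hG : G.PosSemidef) (p q : V3) :
    quadG G (p + q) = (p0 G p + p0 G q) ^ 2 - √(sCM G p q) ^ 2 := by
  rw [Real.sq_sqrt (by linarith [four_le_sCM hG p q]), sCM, sub_sub_cancel]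

theorem total_dotProduct_eoV (hG : G.PosSemidef) (p q ω : V3) :
    (p + q) ⬝ᵥ G *ᵥ eoV G ω = √(sCM G p q) * dirTime G p q ω := by
  rw [dirTime, mul_div_cancel₀ _ (sqrt_sCM_pos hG p q).ne',
    dotProduct_mulVec_comm_of_isSymm (isSymm_of_posSemidef hG), dotProduct_comm]

theorem quadG_dirVec (hG : G.PosDef) (p q : V3) {ω : V3} (hω : enorm2 ω = 1) :
    quadG G (dirVec G p q ω) = 1 + dirTime G p q ω ^ 2 := by
  have hN := add_pos (p0_pos hG.posSemidef p) (p0_pos hG.posSemidef q)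
  have hr := sqrt_sCM_pos hG.posSemidef p q
  have hs := isSymm_of_posSemidef hG.posSemidef
  rw [dirVec_eq, quadG_add_smul hs, quadG_eoV hG, hω, dotProduct_mulVec_comm_of_isSymm hs,
    total_dotProduct_eoV hG.posSemidef, quadG_add_eq_sub_sq hG.posSemidef]
  field_simp
  ring

theorem total_dotProduct_dirVec (hG : G.PosSemidef) (p q ω : V3) :
    (p + q) ⬝ᵥ G *ᵥ dirVec G p q ω = (p0 G p + p0 G q) * dirTime G p q ω := by
  have hN := add_pos (p0_pos hG p) (p0_pos hG q)
  have hr := sqrt_sCM_pos hG p q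
  have hn := quadG_add_eq_sub_sq hG p q
  rw [quadG] at hn
  rw [dotProduct_dirVec, total_dotProduct_eoV hG, hn]
  field_simp
  ring

theorem aCoef_eq (hG : G.PosSemidef) (p q ω : V3) :
    aCoef G p q ω = q ⬝ᵥ G *ᵥ dirVec G p q ω - p0 G q * dirTime G p q ω := by
  have hs := isSymm_of_posSemidef hG
  rw [dotProduct_dirVec, aCoef, dotProduct_comm (G *ᵥ q), dirTime,
    dotProduct_mulVec_comm_of_isSymm hs (p + q) q,
    dotProduct_mulVec_comm_of_isSymm hs (eoV G ω) q, div_mul_eq_div_div]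
  ring

theorem neg_aCoef_eq (hG : G.PosSemidef) (p q ω : V3) :
    -aCoef G p q ω = p ⬝ᵥ G *ᵥ dirVec G p q ω - p0 G p * dirTime G p q ω := by
  have h := total_dotProduct_dirVec hG p q ω
  rw [add_dotProduct] at h
  rw [aCoef_eq hG]
  linear_combination -h

theorem p0_pPost (hG : G.PosDef) (p q : V3) {ω : V3} (hω : enorm2 ω = 1) :
    p0 G (pPost G p q ω) = p0 G p + 2 * aCoef G p q ω * dirTime G p q ω := by
  have h := p0_sub_smul_reflection hG.posSemidef (quadG_dirVec hG p q hω) p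
  rw [← neg_aCoef_eq hG.posSemidef] at h
  convert h using 2
  · ext i
    simp [pPost]
  · ring

theorem p0_qPost (hG : G.PosDef) (p q : V3) {ω : V3} (hω : enorm2 ω = 1) :
    p0 G (qPost G p q ω) = p0 G q - 2 * aCoef G p q ω * dirTime G p q ω := by
  have h := p0_sub_smul_reflection hG.posSemidef (quadG_dirVec hG p q hω) q
  rwa [← aCoef_eq hG.posSemidef] at h

theorem p0_pPost_add_p0_qPost (hG : G.PosDef) (p q : V3) {ω : V3} (hω : enorm2 ω = 1) :
    p0 G (pPost G p q ω) + p0 G (qPost G p q ω) = p0 G p + p0 G q := by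
  rw [p0_pPost hG p q hω, p0_qPost hG p q hω]
  ring

end Collision

section CollisionKernel

theorem rpow_le_max_one_add_inv_sq {x a : ℝ} (hx : 0 ≤ x) (ha : -2 ≤ a) (ha' : a ≤ 1) :
    x ^ a ≤ max 1 x + (x ^ 2)⁻¹ := by
  rcases le_or_gt x 1 with hx1 | hx1
  · rcases hx.eq_or_lt with rfl | hx0
    · rcases eq_or_ne a 0 with rfl | ha0 <;> simp [*]
    · calc x ^ a ≤ x ^ (-2 : ℝ) := Real.rpow_le_rpow_of_exponent_ge hx0 hx1 ha
        _ = (x ^ 2)⁻¹ := by rw [Real.rpow_neg hx, Real.rpow_two]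
        _ ≤ max 1 x + (x ^ 2)⁻¹ := le_add_of_nonneg_left (by positivity)
  · calc x ^ a ≤ x ^ (1 : ℝ) := Real.rpow_le_rpow_of_exponent_le hx1.le ha'
      _ = x := Real.rpow_one x
      _ ≤ max 1 x + (x ^ 2)⁻¹ := le_add_of_le_of_nonneg (le_max_right 1 x) (by positivity)

variable {G : Mat3}

theorem collKer_nonneg (hG : G.PosSemidef) (b : ℝ) (p q : V3) : 0 ≤ collKer G b p q :=
  div_nonneg (mul_nonneg (Real.rpow_nonneg (Real.sqrt_nonneg _) _) (Real.sqrt_nonneg _))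
    (mul_pos (p0_pos hG p) (p0_pos hG q)).le

theorem hrel_eq_zero_of_quadG_sub_eq_zero {p q : V3} (h : quadG G (p - q) = 0) :
    hrel G p q = 0 :=
  Real.sqrt_eq_zero_of_nonpos (by linarith [sq_nonneg (p0 G p - p0 G q)])

theorem inv_hrel_sq_mul_sqrt_sCM_le (hG : G.PosSemidef) (p q : V3) :
    (hrel G p q ^ 2)⁻¹ * √(sCM G p q) / (p0 G p * p0 G q) ≤ 1 + 2 / quadG G (p - q) := by
  rcases (quadG_nonneg hG (p - q)).eq_or_lt' with hD | hD
  · simp [hD, hrel_eq_zero_of_quadG_sub_eq_zero hD]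
  have hPQ : 1 ≤ p0 G p * p0 G q := one_le_mul_of_one_le_of_one_le (one_le_p0 hG p) (one_le_p0 hG q)
  have hDle := quadG_sub_le hG p q
  have hh : 0 < hrel G p q ^ 2 := pos_of_mul_pos_left (hD.trans_le hDle) (by linarith)
  have hs := four_le_sCM hG p q
  have hr : √(sCM G p q) ≤ (hrel G p q ^ 2 + 4) / 2 := by
    have h2 : 2 ≤ √(sCM G p q) := Real.le_sqrt_of_sq_le (by linarith)
    rw [hrel_sq hG]
    nlinarith [Real.sq_sqrt (by linarith : 0 ≤ sCM G p q)]
  calc (hrel G p q ^ 2)⁻¹ * √(sCM G p q) / (p0 G p * p0 G q)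
      ≤ (hrel G p q ^ 2)⁻¹ * ((hrel G p q ^ 2 + 4) / 2) / (p0 G p * p0 G q) := by gcongr
    _ = 1 / (2 * (p0 G p * p0 G q)) + 2 / (hrel G p q ^ 2 * (p0 G p * p0 G q)) := by
      have hh0 : hrel G p q ≠ 0 := (pow_ne_zero_iff two_ne_zero).mp hh.ne'
      have hP0 := p0_pos hG p
      have hQ0 := p0_pos hG q
      field_simp
      ring
    _ ≤ 1 + 2 / quadG G (p - q) := by
      gcongr
      exact div_le_one_of_le₀ (by linarith) (by linarith)

theorem collKer_le (hG : G.PosSemidef) {b : ℝ} (hb0 : 0 ≤ b) (hb3 : b ≤ 3) (p q : V3) :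
    collKer G b p q ≤ 5 + 2 / quadG G (p - q) := by
  have hPQ : 0 < p0 G p * p0 G q := mul_pos (p0_pos hG p) (p0_pos hG q)
  have hs := four_le_sCM hG p q
  have hmax : max 1 (hrel G p q) ≤ √(sCM G p q) := by
    refine max_le (Real.le_sqrt_of_sq_le (by linarith)) (Real.le_sqrt_of_sq_le ?_)
    linarith [hrel_sq hG p q]
  have hrpow : hrel G p q ^ (1 - b) ≤ √(sCM G p q) + (hrel G p q ^ 2)⁻¹ :=
    (rpow_le_max_one_add_inv_sq (Real.sqrt_nonneg _) (by linarith) (by linarith)).trans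
      (add_le_add_left hmax _)
  have hfar : √(sCM G p q) * √(sCM G p q) / (p0 G p * p0 G q) ≤ 4 := by
    rw [Real.mul_self_sqrt (by linarith), div_le_iff₀ hPQ]
    exact sCM_le hG p q
  calc collKer G b p q
      ≤ (√(sCM G p q) + (hrel G p q ^ 2)⁻¹) * √(sCM G p q) / (p0 G p * p0 G q) := by
        rw [collKer]
        gcongr
    _ = √(sCM G p q) * √(sCM G p q) / (p0 G p * p0 G q)
        + (hrel G p q ^ 2)⁻¹ * √(sCM G p q) / (p0 G p * p0 G q) := by rw [add_mul, add_div]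
    _ ≤ 5 + 2 / quadG G (p - q) := by linarith [inv_hrel_sq_mul_sqrt_sCM_le hG p q]

end CollisionKernel

section Ellipticity

theorem det_le_pow_card_of_quadratic_le {ι : Type*} [Fintype ι] [DecidableEq ι]
    {G : Matrix ι ι ℝ} {c : ℝ} (hG : G.PosSemidef) (hc : ∀ x, x ⬝ᵥ G *ᵥ x ≤ c * (x ⬝ᵥ x)) :
    G.det ≤ c ^ Fintype.card ι := by
  have heig (i : ι) : hG.isHermitian.eigenvalues i ≤ c := by
    have h := hc (hG.isHermitian.eigenvectorBasis i)
    have hunit := real_inner_self_eq_norm_sq (hG.isHermitian.eigenvectorBasis i)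
    rw [hG.isHermitian.eigenvectorBasis.norm_eq_one, EuclideanSpace.inner_eq_star_dotProduct,
      star_trivial] at hunit
    rw [hG.isHermitian.eigenvalues_eq]
    simpa [hunit] using h
  calc G.det = ∏ i, hG.isHermitian.eigenvalues i := by simp [hG.isHermitian.det_eq_prod_eigenvalues]
    _ ≤ ∏ _i : ι, c := Finset.prod_le_prod (fun i _ => hG.eigenvalues_nonneg i) fun i _ => heig i
    _ = c ^ Fintype.card ι := by simp

theorem enorm2_eq_dotProduct (p : V3) : enorm2 p = p ⬝ᵥ p := by
  simp [enorm2, dotProduct, sq]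

theorem enorm2_nonneg (p : V3) : 0 ≤ enorm2 p :=
  Finset.sum_nonneg fun _ _ => sq_nonneg _

theorem enorm2_sphV (ω : Sph) : enorm2 (sphV ω) = 1 := by
  have h := EuclideanSpace.norm_sq_eq (ω : EuclideanSpace ℝ (Fin 3))
  simpa [enorm2, sphV] using h.symm

theorem jap_pos (p : V3) : 0 < jap p :=
  Real.sqrt_pos.mpr (by linarith [enorm2_nonneg p])

/-- Two-sided bounds of the inverse metric `G` by the Euclidean metric. Estimates in which the
metric enters only through the two constants are uniform in time. -/
structure IsUniformlyElliptic (ε c : ℝ) (G : Mat3) : Prop where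
  isSymm : G.IsSymm
  mul_enorm2_le_quadG (p : V3) : ε * enorm2 p ≤ quadG G p
  quadG_le_mul_enorm2 (p : V3) : quadG G p ≤ c * enorm2 p

namespace IsUniformlyElliptic

variable {ε c : ℝ} {G : Mat3}

theorem posDef (hG : IsUniformlyElliptic ε c G) (hε : 0 < ε) : G.PosDef := by
  refine PosDef.of_dotProduct_mulVec_pos (isHermitian_iff_isSymm.mpr hG.isSymm) fun p hp => ?_
  have hp' : 0 < enorm2 p := by
    rw [enorm2_eq_dotProduct]
    simpa using dotProduct_star_self_pos_iff.mpr hp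
  exact (mul_pos hε hp').trans_le (hG.mul_enorm2_le_quadG p)

theorem det_le (hG : IsUniformlyElliptic ε c G) (hε : 0 < ε) : G.det ≤ c ^ 3 :=
  det_le_pow_card_of_quadratic_le (hG.posDef hε).posSemidef fun p => by
    rw [← enorm2_eq_dotProduct]
    exact hG.quadG_le_mul_enorm2 p

theorem jap_le_mul_p0 (hG : IsUniformlyElliptic ε c G) (hε : 0 < ε) (p : V3) :
    jap p ≤ √(max 1 ε⁻¹) * p0 G p := by
  rw [jap, p0, ← Real.sqrt_mul (by positivity)]
  refine Real.sqrt_le_sqrt ?_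
  calc 1 + enorm2 p = 1 * 1 + ε⁻¹ * (ε * enorm2 p) := by field_simp
    _ ≤ max 1 ε⁻¹ * 1 + max 1 ε⁻¹ * quadG G p := by
      gcongr
      · exact le_max_left _ _
      · exact mul_nonneg hε.le (enorm2_nonneg p)
      · exact le_max_right _ _
      · exact hG.mul_enorm2_le_quadG p
    _ = max 1 ε⁻¹ * (1 + quadG G p) := by ring

theorem p0_le_mul_jap (hG : IsUniformlyElliptic ε c G) (p : V3) : p0 G p ≤ √(max 1 c) * jap p := by
  rw [jap, p0, ← Real.sqrt_mul (by positivity)]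
  refine Real.sqrt_le_sqrt ?_
  calc 1 + quadG G p ≤ 1 * 1 + c * enorm2 p := by linarith [hG.quadG_le_mul_enorm2 p]
    _ ≤ max 1 c * 1 + max 1 c * enorm2 p := by
      gcongr
      · exact le_max_left _ _
      · exact enorm2_nonneg p
      · exact le_max_right _ _
    _ = max 1 c * (1 + enorm2 p) := by ring

theorem jap_le_mul_jap_post (hG : IsUniformlyElliptic ε c G) (hε : 0 < ε) (p q : V3) {ω : V3}
    (hω : enorm2 ω = 1) :
    jap p ≤ 2 * √(max 1 ε⁻¹) * max 1 c * (jap (pPost G p q ω) * jap (qPost G p q ω)) := by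
  have hpd := hG.posDef hε
  have henergy := p0_pPost_add_p0_qPost hpd p q hω
  have hp' := one_le_p0 hpd.posSemidef (pPost G p q ω)
  have hq' := one_le_p0 hpd.posSemidef (qPost G p q ω)
  have hp : p0 G p ≤ 2 * (p0 G (pPost G p q ω) * p0 G (qPost G p q ω)) := by
    nlinarith [one_le_p0 hpd.posSemidef q, mul_nonneg (sub_nonneg.mpr hp') (sub_nonneg.mpr hq')]
  calc jap p ≤ √(max 1 ε⁻¹) * p0 G p := hG.jap_le_mul_p0 hε p
    _ ≤ √(max 1 ε⁻¹) * (2 * (p0 G (pPost G p q ω) * p0 G (qPost G p q ω))) := by gcongr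
    _ ≤ √(max 1 ε⁻¹) * (2 * ((√(max 1 c) * jap (pPost G p q ω))
          * (√(max 1 c) * jap (qPost G p q ω)))) := by
      gcongr
      · exact (p0_pos hpd.posSemidef _).le.trans (hG.p0_le_mul_jap _)
      · exact hG.p0_le_mul_jap _
      · exact hG.p0_le_mul_jap _
    _ = 2 * √(max 1 ε⁻¹) * (√(max 1 c) * √(max 1 c))
          * (jap (pPost G p q ω) * jap (qPost G p q ω)) := by ring
    _ = _ := by rw [Real.mul_self_sqrt (by positivity)]

end IsUniformlyElliptic

end Ellipticity

section Integrals

-- If `u` is not integrable, its integral is `0` by convention.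
theorem integral_le_integral_of_le_of_nonneg {α : Type*} [MeasurableSpace α] {μ : Measure α}
    {u v : α → ℝ} (hv : Integrable v μ) (hv0 : 0 ≤ v) (huv : u ≤ v) :
    ∫ x, u x ∂μ ≤ ∫ x, v x ∂μ := by
  by_cases hu : Integrable u μ
  · exact integral_mono hu hv huv
  · rw [integral_undef hu]
    exact integral_nonneg hv0

section AddHaar

variable {E : Type*} [NormedAddCommGroup E] [NormedSpace ℝ E] [FiniteDimensional ℝ E]
  [MeasurableSpace E] [BorelSpace E] (μ : Measure E) [μ.IsAddHaarMeasure]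

theorem integrable_exp_neg_mul_norm [Nontrivial E] {a : ℝ} (ha : 0 < a) :
    Integrable (fun x : E => Real.exp (-a * ‖x‖)) μ := by
  refine (integrable_fun_norm_addHaar μ (f := fun y => Real.exp (-a * y))).mpr ?_
  have hdim : (-1 : ℝ) < (Module.finrank ℝ E - 1 : ℕ) := by
    exact neg_one_lt_zero.trans_le (Nat.cast_nonneg _)
  simpa using integrableOn_rpow_mul_exp_neg_mul_rpow hdim one_pos ha

theorem integrable_indicator_ball_inv_norm_sq (hE : 2 < Module.finrank ℝ E) :
    Integrable ((Metric.ball (0 : E) 1).indicator fun x => (‖x‖ ^ 2)⁻¹) μ := by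
  rw [integrable_indicator_iff Metric.isOpen_ball.measurableSet]
  refine integrableOn_ball_of_norm_le_rpow (C := 1) (α := 2) (by lia) (by exact_mod_cast hE)
    (.of_forall fun x => ?_) (by fun_prop)
  rw [Real.rpow_neg (norm_nonneg x), Real.rpow_two, one_mul, Real.norm_of_nonneg (by positivity)]

end AddHaar

theorem inv_norm_sq_le_one_add_indicator {E : Type*} [NormedAddCommGroup E] (x : E) :
    (‖x‖ ^ 2)⁻¹ ≤ 1 + (Metric.ball (0 : E) 1).indicator (fun x => (‖x‖ ^ 2)⁻¹) x := by
  by_cases hx : x ∈ Metric.ball (0 : E) 1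
  · simp [indicator_of_mem hx]
  · rw [indicator_of_notMem hx, add_zero]
    rw [mem_ball_zero_iff, not_lt] at hx
    exact inv_le_one_of_one_le₀ (one_le_pow₀ hx)

/-- An integrable majorant in `q` of `collKer G b p q * winv G Zη q`, uniform in the metrics that
satisfy `IsUniformlyElliptic ε c` and in the weights `z ≤ Zη`. -/
def collMajorant (ε z : ℝ) (p q : V3) : ℝ :=
  (5 + 2 / ε) * Real.exp z * Real.exp (-(z * √ε) * ‖q‖)
    + 2 / ε * (Metric.ball (0 : V3) 1).indicator (fun x => (‖x‖ ^ 2)⁻¹) (p - q)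

theorem integrable_collMajorant {ε z : ℝ} (hε : 0 < ε) (hz : 0 < z) (p : V3) :
    Integrable (collMajorant ε z p) :=
  ((integrable_exp_neg_mul_norm volume (mul_pos hz (Real.sqrt_pos.mpr hε))).const_mul _).add
    (((integrable_indicator_ball_inv_norm_sq volume (by simp)).comp_sub_left p).const_mul _)

theorem integral_collMajorant_eq {ε z : ℝ} (hε : 0 < ε) (hz : 0 < z) (p : V3) :
    ∫ q, collMajorant ε z p q = ∫ q, collMajorant ε z 0 q := by
  have hexp := integrable_exp_neg_mul_norm (volume : Measure V3)
    (mul_pos hz (Real.sqrt_pos.mpr hε))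
  have hball := integrable_indicator_ball_inv_norm_sq (volume : Measure V3) (by simp)
  have hsplit (x : V3) := integral_add (hexp.const_mul ((5 + 2 / ε) * Real.exp z))
    ((hball.comp_sub_left x).const_mul (2 / ε))
  simp only [collMajorant, hsplit, integral_const_mul]
  rw [integral_sub_left_eq_self _ volume p, integral_sub_left_eq_self _ volume 0]

theorem norm_sq_le_enorm2 (p : V3) : ‖p‖ ^ 2 ≤ enorm2 p := by
  obtain ⟨i, hi⟩ := Finite.exists_max fun i => ‖p i‖
  have hp : ‖p‖ ≤ ‖p i‖ := (pi_norm_le_iff_of_nonneg (norm_nonneg _)).mpr hi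
  calc ‖p‖ ^ 2 ≤ ‖p i‖ ^ 2 := by gcongr
    _ = p i ^ 2 := by simp
    _ ≤ enorm2 p := Finset.single_le_sum (fun j _ => sq_nonneg (p j)) (Finset.mem_univ i)

namespace IsUniformlyElliptic

variable {ε c : ℝ} {G : Mat3}

theorem mul_norm_sq_le_quadG (hG : IsUniformlyElliptic ε c G) (hε : 0 < ε) (p : V3) :
    ε * ‖p‖ ^ 2 ≤ quadG G p :=
  (mul_le_mul_of_nonneg_left (norm_sq_le_enorm2 p) hε.le).trans (hG.mul_enorm2_le_quadG p)

theorem winv_le (hG : IsUniformlyElliptic ε c G) (hε : 0 < ε) {z Zη : ℝ} (hz : 0 < z) (hZ : z ≤ Zη)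
    (q : V3) : winv G Zη q ≤ Real.exp z * Real.exp (-(z * √ε) * ‖q‖) := by
  have hq : √ε * ‖q‖ ≤ p0 G q := by
    refine Real.le_sqrt_of_sq_le ?_
    rw [mul_pow, Real.sq_sqrt hε.le]
    linarith [hG.mul_norm_sq_le_quadG hε q]
  have hp0 := one_le_p0 (hG.posDef hε).posSemidef q
  rw [winv, ← Real.exp_add, Real.exp_le_exp]
  nlinarith [mul_le_mul_of_nonneg_left hq hz.le]

theorem collKer_mul_winv_le (hG : IsUniformlyElliptic ε c G) (hε : 0 < ε) {z Zη b : ℝ} (hz : 0 < z)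
    (hZ : z ≤ Zη) (hb0 : 0 ≤ b) (hb3 : b ≤ 3) (p q : V3) :
    collKer G b p q * winv G Zη q ≤ collMajorant ε z p q := by
  have hpsd := (hG.posDef hε).posSemidef
  set φ := (Metric.ball (0 : V3) 1).indicator (fun x => (‖x‖ ^ 2)⁻¹) (p - q)
  have hφ : 0 ≤ φ := indicator_nonneg (fun x _ => by positivity) _
  have hinv : 2 / quadG G (p - q) ≤ 2 / ε * (1 + φ) := by
    rcases eq_or_ne p q with rfl | hpq
    · simpa [quadG] using by positivity
    have hpq' : 0 < ‖p - q‖ := norm_pos_iff.mpr (sub_ne_zero.mpr hpq)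
    calc 2 / quadG G (p - q) ≤ 2 / (ε * ‖p - q‖ ^ 2) := by
          gcongr
          exact hG.mul_norm_sq_le_quadG hε (p - q)
      _ = 2 / ε * (‖p - q‖ ^ 2)⁻¹ := by field_simp
      _ ≤ 2 / ε * (1 + φ) := by
        gcongr
        exact inv_norm_sq_le_one_add_indicator (p - q)
  have hw1 : winv G Zη q ≤ 1 := Real.exp_le_one_iff.mpr <| neg_nonpos.mpr <|
    mul_nonneg (hz.le.trans hZ) (sub_nonneg.mpr (one_le_p0 hpsd q))
  calc collKer G b p q * winv G Zη q
      ≤ (5 + 2 / ε * (1 + φ)) * winv G Zη q := by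
        gcongr
        · exact (Real.exp_pos _).le
        · linarith [collKer_le hpsd hb0 hb3 p q]
    _ = (5 + 2 / ε) * winv G Zη q + 2 / ε * φ * winv G Zη q := by ring
    _ ≤ (5 + 2 / ε) * (Real.exp z * Real.exp (-(z * √ε) * ‖q‖)) + 2 / ε * φ * 1 := by
        gcongr
        exact hG.winv_le hε hz hZ q
    _ = collMajorant ε z p q := by rw [collMajorant, mul_one, ← mul_assoc]

end IsUniformlyElliptic

end Integrals

section CollisionOperator

theorem collMajorant_nonneg {ε : ℝ} (hε : 0 < ε) (z : ℝ) (p q : V3) : 0 ≤ collMajorant ε z p q := by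
  have hφ : 0 ≤ (Metric.ball (0 : V3) 1).indicator (fun x => (‖x‖ ^ 2)⁻¹) (p - q) :=
    indicator_nonneg (fun x _ => by positivity) _
  rw [collMajorant]
  positivity

instance : IsFiniteMeasure sphMeasure :=
  inferInstanceAs (IsFiniteMeasure (volume : Measure (EuclideanSpace ℝ (Fin 3))).toSphere)

variable {ε c z Zη b fval : ℝ} {G : Mat3} {fn : V3 → ℝ}

theorem IsUniformlyElliptic.gammaIter_le (hG : IsUniformlyElliptic ε c G) (hε : 0 < ε)
    (hz : 0 < z) (hZ : z ≤ Zη) (hb0 : 0 ≤ b) (hb3 : b ≤ 3) (hfn : 0 ≤ fn) (hfval : 0 ≤ fval)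
    (p : V3) {N : ℝ} (hN : 0 ≤ N)
    (hgain : ∀ q (ω : Sph), fn (pPost G p q (sphV ω)) * fn (qPost G p q (sphV ω)) ≤ N) :
    GammaIter G Zη b fn fval p
      ≤ √(c ^ 3) * (N * sphMeasure.real univ * ∫ q, collMajorant ε z 0 q) := by
  have hpd := hG.posDef hε
  have hinner (q : V3) : ∫ ω : Sph, collKer G b p q *
      (fn (pPost G p q (sphV ω)) * fn (qPost G p q (sphV ω)) - fval * fn q) ∂sphMeasure
        ≤ N * sphMeasure.real univ * collKer G b p q := by
    have hker := collKer_nonneg hpd.posSemidef b p q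
    calc _ ≤ ∫ _ω : Sph, collKer G b p q * N ∂sphMeasure := by
          refine integral_le_integral_of_le_of_nonneg (integrable_const _)
            (fun _ => mul_nonneg hker hN) fun ω => ?_
          have hloss : 0 ≤ fval * fn q := mul_nonneg hfval (hfn q)
          exact mul_le_mul_of_nonneg_left (by linarith [hgain q ω]) hker
      _ = N * sphMeasure.real univ * collKer G b p q := by
          rw [integral_const, smul_eq_mul]
          ring
  have houter : ∫ q, (∫ ω : Sph, collKer G b p q *
      (fn (pPost G p q (sphV ω)) * fn (qPost G p q (sphV ω)) - fval * fn q) ∂sphMeasure)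
        * winv G Zη q ≤ N * sphMeasure.real univ * ∫ q, collMajorant ε z 0 q := by
    rw [← integral_collMajorant_eq hε hz p, ← integral_const_mul]
    refine integral_le_integral_of_le_of_nonneg ((integrable_collMajorant hε hz p).const_mul _)
      (fun q => mul_nonneg (by positivity) (collMajorant_nonneg hε z p q)) fun q => ?_
    refine (mul_le_mul_of_nonneg_right (hinner q) (Real.exp_pos _).le).trans ?_
    rw [mul_assoc]
    exact mul_le_mul_of_nonneg_left (hG.collKer_mul_winv_le hε hz hZ hb0 hb3 p q) (by positivity)
  have hmajorant : 0 ≤ ∫ q, collMajorant ε z 0 q :=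
    integral_nonneg fun q => collMajorant_nonneg hε z 0 q
  calc GammaIter G Zη b fn fval p
      ≤ √G.det * (N * sphMeasure.real univ * ∫ q, collMajorant ε z 0 q) :=
        mul_le_mul_of_nonneg_left houter (Real.sqrt_nonneg _)
    _ ≤ √(c ^ 3) * (N * sphMeasure.real univ * ∫ q, collMajorant ε z 0 q) := by
        gcongr
        exact hG.det_le hε

theorem IsUniformlyElliptic.jap_rpow_mul_gain_le (hG : IsUniformlyElliptic ε c G) (hε : 0 < ε)
    (hfn : 0 ≤ fn) {m D : ℝ} (hm : 0 ≤ m) (hD : ∀ p, jap p ^ m * fn p ≤ D) (p q : V3) {ω : V3}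
    (hω : enorm2 ω = 1) :
    jap p ^ m * (fn (pPost G p q ω) * fn (qPost G p q ω))
      ≤ (2 * √(max 1 ε⁻¹) * max 1 c) ^ m * D ^ 2 := by
  set K := 2 * √(max 1 ε⁻¹) * max 1 c
  have hK : 0 ≤ K := by positivity
  have hp' := jap_pos (pPost G p q ω)
  have hq' := jap_pos (qPost G p q ω)
  have hweighted (x : V3) : 0 ≤ jap x ^ m * fn x :=
    mul_nonneg (Real.rpow_nonneg (jap_pos x).le m) (hfn x)
  calc jap p ^ m * (fn (pPost G p q ω) * fn (qPost G p q ω))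
      ≤ (K * (jap (pPost G p q ω) * jap (qPost G p q ω))) ^ m
          * (fn (pPost G p q ω) * fn (qPost G p q ω)) := by
        gcongr
        · exact mul_nonneg (hfn _) (hfn _)
        · exact (jap_pos p).le
        · exact hG.jap_le_mul_jap_post hε p q hω
    _ = K ^ m * ((jap (pPost G p q ω) ^ m * fn (pPost G p q ω))
          * (jap (qPost G p q ω) ^ m * fn (qPost G p q ω))) := by
        rw [Real.mul_rpow hK (by positivity), Real.mul_rpow hp'.le hq'.le]
        ring
    _ ≤ K ^ m * D ^ 2 := by
        rw [sq]
        gcongr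
        · exact hweighted _
        · exact (hweighted p).trans (hD p)
        · exact hD _
        · exact hD _

theorem exists_jap_rpow_mul_gammaIter_le (c : ℝ) {m : ℝ} (hε : 0 < ε) (hz : 0 < z) (hb0 : 0 ≤ b)
    (hb3 : b ≤ 3) (hm : 0 ≤ m) :
    ∃ L, 0 ≤ L ∧ ∀ G Zη, IsUniformlyElliptic ε c G → z ≤ Zη →
      ∀ fn : V3 → ℝ, 0 ≤ fn → ∀ fval, 0 ≤ fval → ∀ D, (∀ p, jap p ^ m * fn p ≤ D) →
        ∀ p, jap p ^ m * GammaIter G Zη b fn fval p ≤ L * D ^ 2 := by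
  have hmajorant : 0 ≤ ∫ q, collMajorant ε z 0 q :=
    integral_nonneg fun q => collMajorant_nonneg hε z 0 q
  refine ⟨√(c ^ 3) * ((2 * √(max 1 ε⁻¹) * max 1 c) ^ m * sphMeasure.real univ
    * ∫ q, collMajorant ε z 0 q), by positivity, fun G Zη hG hZ fn hfn fval hfval D hD p => ?_⟩
  have hjap : 0 < jap p ^ m := Real.rpow_pos_of_pos (jap_pos p) m
  have hle := hG.gammaIter_le (N := (2 * √(max 1 ε⁻¹) * max 1 c) ^ m * D ^ 2 / jap p ^ m) hε hz hZ
    hb0 hb3 hfn hfval p (by positivity) fun q ω => by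
      rw [le_div_iff₀' hjap]
      exact hG.jap_rpow_mul_gain_le hε hfn hm hD p q (enorm2_sphV ω)
  calc _ ≤ _ := mul_le_mul_of_nonneg_left hle hjap.le
    _ = _ := by field_simp

end CollisionOperator

section Shear

open scoped Kronecker

-- This is the Cauchy–Schwarz inequality for `G⁻¹ ⊗ G⁻¹`, applied to `S` and `(G x) (G x)ᵀ`.
theorem sq_dotProduct_mulVec_le_sum_inv_mul_mul_inv {ι : Type*} [Fintype ι] [DecidableEq ι]
    {G : Matrix ι ι ℝ} (hG : G.PosDef) (S : Matrix ι ι ℝ) (x : ι → ℝ) :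
    (x ⬝ᵥ S *ᵥ x) ^ 2 ≤ (∑ a, ∑ b, (G⁻¹ * S * G⁻¹) a b * S a b) * (x ⬝ᵥ G *ᵥ x) ^ 2 := by
  have hsymm : Gᵀ = G := isSymm_of_posSemidef hG.posSemidef
  have hunit : IsUnit G.det := hG.det_pos.ne'.isUnit
  set V := vecMulVec (G *ᵥ x) (G *ᵥ x)
  have hV : G⁻¹ * V * G⁻¹ = vecMulVec x x := by
    rw [mul_vecMulVec, vecMulVec_mul, mulVec_mulVec, nonsing_inv_mul G hunit, one_mulVec,
      ← vecMul_transpose, hsymm, vecMul_vecMul, mul_nonsing_inv G hunit, vecMul_one]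
  have hpair (M N : Matrix ι ι ℝ) :
      vec M ⬝ᵥ (G⁻¹ ⊗ₖ G⁻¹) *ᵥ vec N = (Mᵀ * (G⁻¹ * N * G⁻¹)).trace := by
    rw [kronecker_mulVec_vec, vec_dotProduct_vec, transpose_nonsing_inv, hsymm]
  have hpairV (M : Matrix ι ι ℝ) : vec M ⬝ᵥ (G⁻¹ ⊗ₖ G⁻¹) *ᵥ vec V = x ⬝ᵥ M *ᵥ x := by
    rw [hpair, hV, mul_vecMulVec, trace_vecMulVec, mulVec_transpose, dotProduct_mulVec]
  have hVV : x ⬝ᵥ V *ᵥ x = (x ⬝ᵥ G *ᵥ x) ^ 2 := by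
    simp only [V, vecMulVec_mulVec, dotProduct_smul, dotProduct_comm (G *ᵥ x) x]
    simp [sq]
  have hSS : vec S ⬝ᵥ (G⁻¹ ⊗ₖ G⁻¹) *ᵥ vec S = ∑ a, ∑ b, (G⁻¹ * S * G⁻¹) a b * S a b := by
    rw [hpair, trace_mul_comm]
    simp [trace, mul_apply]
  have hCS := sq_dotProduct_mulVec_le (hG.inv.kronecker hG.inv).posSemidef (vec S) (vec V)
  rwa [hpairV, hpairV, hVV, hSS] at hCS

variable {G K : Mat3} {γ η Zη : ℝ}

theorem p0_sub_one_le_quadG_div_p0 (hG : G.PosSemidef) (p : V3) :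
    p0 G p - 1 ≤ quadG G p / p0 G p := by
  rw [le_div_iff₀ (p0_pos hG p)]
  nlinarith [p0_sq hG p, one_le_p0 hG p]

theorem quadK_eq_shearUp_add (G K : Mat3) (p : V3) :
    quadK K p = p ⬝ᵥ shearUp G K *ᵥ p + Hub G K * quadG G p := by
  simp [shearUp, quadK, quadG, sub_mulVec, smul_mulVec]

theorem abs_shearUp_quadratic_le (hG : G.PosDef) (hη : 0 ≤ η) (hH : 0 < Hub G K)
    (hF : Fvar G K ≤ η ^ 2 / 4) (p : V3) :
    |p ⬝ᵥ shearUp G K *ᵥ p| ≤ η * Hub G K * quadG G p := by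
  have hshear : shearSq G K ≤ (η * Hub G K) ^ 2 := by
    rw [Fvar, div_le_iff₀ (by positivity)] at hF
    linarith
  refine abs_le_of_sq_le_sq ?_ (mul_nonneg (by positivity) (quadG_nonneg hG.posSemidef p))
  calc (p ⬝ᵥ shearUp G K *ᵥ p) ^ 2 ≤ shearSq G K * quadG G p ^ 2 :=
        sq_dotProduct_mulVec_le_sum_inv_mul_mul_inv hG _ p
    _ ≤ (η * Hub G K) ^ 2 * quadG G p ^ 2 := by gcongr
    _ = (η * Hub G K * quadG G p) ^ 2 := by ring

theorem lamEta_nonneg (hG : G.PosDef) (hγ : 0 < γ) (hη0 : 0 ≤ η) (hη1 : η ≤ 1) (hZ : 0 ≤ Zη)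
    (hH : γ ≤ Hub G K) (hF : Fvar G K ≤ η ^ 2 / 4) (p : V3) : 0 ≤ lamEta G K γ η Zη p := by
  have hpsd := hG.posSemidef
  have hp := p0_pos hpsd p
  have hquad := quadG_nonneg hpsd p
  have hK : (1 - η) * γ * quadG G p ≤ quadK K p := by
    have hshear := neg_le_of_abs_le (abs_shearUp_quadratic_le hG hη0 (hγ.trans_le hH) hF p)
    calc (1 - η) * γ * quadG G p ≤ (1 - η) * Hub G K * quadG G p := by gcongr
      _ ≤ quadK K p := by linarith [quadK_eq_shearUp_add G K p]
  have hmass : (1 - η) * γ * (p0 G p - 1) ≤ quadK K p / p0 G p :=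
    calc (1 - η) * γ * (p0 G p - 1) ≤ (1 - η) * γ * (quadG G p / p0 G p) :=
          mul_le_mul_of_nonneg_left (p0_sub_one_le_quadG_div_p0 hpsd p)
            (mul_nonneg (sub_nonneg.mpr hη1) hγ.le)
      _ = (1 - η) * γ * quadG G p / p0 G p := by ring
      _ ≤ quadK K p / p0 G p := by gcongr
  exact mul_nonneg (by linarith) hZ

end Shear

section Iteration

theorem le_add_mul_of_hasDerivWithinAt_le {u u' : ℝ → ℝ} {a T κ A : ℝ}
    (hu : ∀ t ∈ Icc a T, HasDerivWithinAt u (u' t) (Icc a T) t) (ha : u a ≤ A)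
    (hκ : ∀ t ∈ Ico a T, u' t ≤ κ) {t : ℝ} (ht : t ∈ Icc a T) : u t ≤ A + κ * (t - a) := by
  have hline (s : ℝ) : HasDerivAt (fun s => A + κ * (s - a)) κ s := by
    simpa using (((hasDerivAt_id s).sub_const a).const_mul κ).const_add A
  refine image_le_of_deriv_right_le_deriv_boundary (B' := fun _ => κ)
    (fun s hs => (hu s hs).continuousWithinAt)
    (fun s hs => (hu s (Ico_subset_Icc_self hs)).mono_of_mem_nhdsWithin (Icc_mem_nhdsGE_of_mem hs))
    (by simpa using ha) (fun s _ => (hline s).continuousAt.continuousWithinAt)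
    (fun s _ => (hline s).hasDerivWithinAt) hκ ht

-- Each step raises the bound `C * B` by at most `L * (C * B) ^ 2 * (T₁ - t₀)`, starting again from
-- `B`; it is preserved when this is at most `(C - 1) * B`, and this fixes `T₁`.
theorem exists_uniform_bound_of_quadratic_deriv_bound {α : Type*} {t₀ T B L C : ℝ} (hT : t₀ < T)
    (hB : 0 ≤ B) (hL : 0 ≤ L) (hC : 1 < C) {u u' : ℕ → ℝ → α → ℝ}
    (hzero : ∀ t ∈ Icc t₀ T, ∀ x, u 0 t x ≤ B) (hinit : ∀ n x, u (n + 1) t₀ x ≤ B)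
    (hderiv : ∀ n, ∀ t ∈ Icc t₀ T, ∀ x,
      HasDerivWithinAt (fun s => u (n + 1) s x) (u' n t x) (Icc t₀ T) t)
    (hquad : ∀ n, ∀ t ∈ Icc t₀ T, ∀ D, (∀ y, u n t y ≤ D) → ∀ x, u' n t x ≤ L * D ^ 2) :
    ∃ T₁, t₀ < T₁ ∧ T₁ ≤ T ∧ ∀ n, ∀ t ∈ Icc t₀ T₁, ∀ x, u n t x ≤ C * B := by
  set δ := (C - 1) / (L * C ^ 2 * B + 1) with hδdef
  have hδ : 0 < δ := div_pos (sub_pos.mpr hC) (by positivity)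
  have hstep : L * (C * B) ^ 2 * δ ≤ (C - 1) * B :=
    calc L * (C * B) ^ 2 * δ = L * C ^ 2 * B / (L * C ^ 2 * B + 1) * ((C - 1) * B) := by
          rw [hδdef]
          ring
      _ ≤ 1 * ((C - 1) * B) := by
          refine mul_le_mul_of_nonneg_right ?_ (mul_nonneg (sub_nonneg.mpr hC.le) hB)
          exact div_le_one_of_le₀ (by linarith) (by positivity)
      _ = (C - 1) * B := one_mul _
  refine ⟨min T (t₀ + δ), lt_min hT (by linarith), min_le_left _ _, fun n => ?_⟩
  have hsub : Icc t₀ (min T (t₀ + δ)) ⊆ Icc t₀ T := Icc_subset_Icc_right (min_le_left _ _)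
  induction n with
  | zero => exact fun t ht x => (hzero t (hsub ht) x).trans (le_mul_of_one_le_left hB hC.le)
  | succ n ih =>
    intro t ht x
    calc u (n + 1) t x ≤ B + L * (C * B) ^ 2 * (t - t₀) :=
          le_add_mul_of_hasDerivWithinAt_le (fun s hs => (hderiv n s (hsub hs) x).mono hsub)
            (hinit n x) (fun s hs => hquad n s (hsub (Ico_subset_Icc_self hs)) _
              (ih s (Ico_subset_Icc_self hs)) x) ht
      _ ≤ B + L * (C * B) ^ 2 * δ := by
          gcongr
          linarith [ht.2.trans (min_le_right T (t₀ + δ))]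
      _ ≤ C * B := by linarith

end Iteration

theorem Zeta_le_Zeta {γ η t₀ t : ℝ} (hγ : 0 < γ) (hη : η ≤ 1) (ht : t₀ ≤ t) :
    Zeta γ η t₀ ≤ Zeta γ η t :=
  Real.exp_le_exp.mpr (mul_le_mul_of_nonneg_left ht (mul_nonneg (sub_nonneg.mpr hη) hγ.le))

theorem isUniformlyElliptic_of_scaled_bounds {γ c t₀ T t : ℝ} {G : Mat3} (hγ : 0 < γ) (hc : 0 < c)
    (ht : t ∈ Icc t₀ T) (hsymm : G.IsSymm)
    (hG : ∀ p, 1 / c * enorm2 p ≤ Zfun γ t ^ 2 * quadG G p ∧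
      Zfun γ t ^ 2 * quadG G p ≤ c * enorm2 p) :
    IsUniformlyElliptic (1 / (c * Zfun γ T ^ 2)) (c / Zfun γ t₀ ^ 2) G := by
  have hZt : 0 < Zfun γ t := Real.exp_pos _
  have hZT : 0 < Zfun γ T := Real.exp_pos _
  have hZt₀ : 0 < Zfun γ t₀ := Real.exp_pos _
  have htT : Zfun γ t ≤ Zfun γ T := Real.exp_le_exp.mpr (by gcongr; exact ht.2)
  have ht₀t : Zfun γ t₀ ≤ Zfun γ t := Real.exp_le_exp.mpr (by gcongr; exact ht.1)
  have hquad (p : V3) : 0 ≤ quadG G p :=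
    nonneg_of_mul_nonneg_right ((mul_nonneg (by positivity) (enorm2_nonneg p)).trans (hG p).1)
      (by positivity)
  refine ⟨hsymm, fun p => ?_, fun p => ?_⟩
  · calc 1 / (c * Zfun γ T ^ 2) * enorm2 p = 1 / c * enorm2 p / Zfun γ T ^ 2 := by field_simp
      _ ≤ quadG G p := by
        rw [div_le_iff₀' (by positivity)]
        exact (hG p).1.trans (by gcongr; exact hquad p)
  · calc quadG G p ≤ c * enorm2 p / Zfun γ t₀ ^ 2 := by
          rw [le_div_iff₀' (by positivity)]
          exact le_trans (by gcongr; exact hquad p) (hG p).2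
      _ = c / Zfun γ t₀ ^ 2 * enorm2 p := by ring

theorem stmt10_general {γ η b c₁ t₀ T B m : ℝ} (hγ : 0 < γ) (hη0 : 0 ≤ η) (hη1 : η ≤ 1)
    (hb0 : 0 ≤ b) (hb3 : b ≤ 3) (hc₁ : 0 < c₁) (hT : t₀ < T) (hm : 0 ≤ m) {g k : ℝ → Mat3}
    (hgsymm : ∀ t ∈ Icc t₀ T, (g t).IsSymm)
    (hgbound : ∀ t ∈ Icc t₀ T, ∀ p : V3,
      (1 / c₁) * enorm2 p ≤ Zfun γ t ^ 2 * quadG (g t) p ∧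
      Zfun γ t ^ 2 * quadG (g t) p ≤ c₁ * enorm2 p)
    (hH : ∀ t ∈ Icc t₀ T, γ ≤ Hub (g t) (k t))
    (hF : ∀ t ∈ Icc t₀ T, Fvar (g t) (k t) ≤ η ^ 2 / 4)
    {f₀ : V3 → ℝ} (hf₀B : ∀ p, jap p ^ m * |f₀ p| ≤ B) {f : ℕ → ℝ → V3 → ℝ}
    (hfz : ∀ t p, f 0 t p = f₀ p)
    (hfpos : ∀ n, ∀ t ∈ Icc t₀ T, ∀ p, 0 ≤ f n t p)
    (hfinit : ∀ n p, f (n + 1) t₀ p = f₀ p)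
    (hfode : ∀ n, ∀ t ∈ Icc t₀ T, ∀ p,
      HasDerivWithinAt (fun s => f (n + 1) s p)
        (-(lamEta (g t) (k t) γ η (Zeta γ η t) p) * f (n + 1) t p
          + GammaIter (g t) (Zeta γ η t) b (f n t) (f (n + 1) t p) p)
        (Icc t₀ T) t)
    {C₂ : ℝ} (hC₂ : 1 < C₂) :
    ∃ T₁, t₀ < T₁ ∧ T₁ ≤ T ∧
      ∀ n, ∀ s ∈ Icc t₀ T₁, ∀ p : V3, jap p ^ m * |f n s p| ≤ C₂ * B := by
  have hε : 0 < 1 / (c₁ * Zfun γ T ^ 2) := by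
    have hZT : 0 < Zfun γ T := Real.exp_pos _
    positivity
  have hjap (p : V3) : 0 ≤ jap p ^ m := Real.rpow_nonneg (jap_pos p).le m
  have hinit (p : V3) : jap p ^ m * f₀ p ≤ B :=
    (mul_le_mul_of_nonneg_left (le_abs_self _) (hjap p)).trans (hf₀B p)
  have hB : 0 ≤ B := (mul_nonneg (hjap 0) (abs_nonneg _)).trans (hf₀B 0)
  obtain ⟨L, hL, hΓ⟩ := exists_jap_rpow_mul_gammaIter_le (z := Zeta γ η t₀) (c₁ / Zfun γ t₀ ^ 2) hε
    (Real.exp_pos _) hb0 hb3 hm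
  have hderiv : ∀ n, ∀ t ∈ Icc t₀ T, ∀ D, (∀ p, jap p ^ m * f n t p ≤ D) → ∀ p,
      jap p ^ m * (-(lamEta (g t) (k t) γ η (Zeta γ η t) p) * f (n + 1) t p
        + GammaIter (g t) (Zeta γ η t) b (f n t) (f (n + 1) t p) p) ≤ L * D ^ 2 := by
    intro n t ht D hD p
    have hG := isUniformlyElliptic_of_scaled_bounds hγ hc₁ ht (hgsymm t ht) (hgbound t ht)
    have hlam : 0 ≤ lamEta (g t) (k t) γ η (Zeta γ η t) p :=
      lamEta_nonneg (hG.posDef hε) hγ hη0 hη1 (Real.exp_pos _).le (hH t ht) (hF t ht) p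
    have hdamp := mul_nonneg (hjap p) (mul_nonneg hlam (hfpos (n + 1) t ht p))
    linarith [hΓ _ _ hG (Zeta_le_Zeta hγ hη1 ht.1) _ (hfpos n t ht) _ (hfpos (n + 1) t ht p) D hD p]
  obtain ⟨T₁, ht₀T₁, hT₁T, hbound⟩ := exists_uniform_bound_of_quadratic_deriv_bound hT hB hL hC₂
    (u := fun n t p => jap p ^ m * f n t p) (fun t _ p => by simpa only [hfz] using hinit p)
    (fun n p => by simpa only [hfinit] using hinit p)
    (fun n t ht p => (hfode n t ht p).const_mul (jap p ^ m)) hderiv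
  refine ⟨T₁, ht₀T₁, hT₁T, fun n s hs p => ?_⟩
  rw [abs_of_nonneg (hfpos n s ⟨hs.1, hs.2.trans hT₁T⟩ p)]
  exact hbound n s hs p

/-- uniform bound for the iteration for the weighted Boltzmann equation.
Under the stated bounds on the Bianchi I data `g, k` on `[t₀,T]`, if `‖f₀‖_{L^∞_m} ≤ B`
and `(f_n)` is the standard iteration, then for every `C₂ > 1` there is `T₁ ∈ (t₀,T]`
with `sup_{t₀ ≤ s ≤ T₁} ‖f_n(s)‖_{L^∞_m} ≤ C₂ B` for all `n`. -/
theorem stmt10 (γ η b c₁ t₀ T B m : ℝ)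
    (hγ : 0 < γ) (hη0 : 0 ≤ η) (hη1 : η < 1) (hb0 : 0 ≤ b) (hb3 : b < 3)
    (hc₁ : 1 ≤ c₁) (ht₀ : 0 ≤ t₀) (hT : t₀ < T) (hm : 0 ≤ m)
    (g k : ℝ → Mat3)
    (hgcont : ∀ a b' : Fin 3, ContinuousOn (fun t => g t a b') (Icc t₀ T))
    (hkcont : ∀ a b' : Fin 3, ContinuousOn (fun t => k t a b') (Icc t₀ T))
    (hgsymm : ∀ t ∈ Icc t₀ T, (g t).IsSymm)
    (hksymm : ∀ t ∈ Icc t₀ T, (k t).IsSymm)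
    (hgbound : ∀ t ∈ Icc t₀ T, ∀ p : V3,
      (1 / c₁) * enorm2 p ≤ Zfun γ t ^ 2 * quadG (g t) p ∧
      Zfun γ t ^ 2 * quadG (g t) p ≤ c₁ * enorm2 p)
    (hkbound : ∀ t ∈ Icc t₀ T, ∀ a b' : Fin 3, |k t a b'| ≤ c₁ / Zfun γ t ^ 2)
    (hH : ∀ t ∈ Icc t₀ T, γ ≤ Hub (g t) (k t))
    (hF : ∀ t ∈ Icc t₀ T, Fvar (g t) (k t) ≤ η ^ 2 / 4)
    (f₀ : V3 → ℝ) (hf₀pos : ∀ p, 0 ≤ f₀ p) (hf₀B : ∀ p, jap p ^ m * |f₀ p| ≤ B)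
    (f : ℕ → ℝ → V3 → ℝ)
    (hfz : ∀ t p, f 0 t p = f₀ p)
    (hfpos : ∀ n, ∀ t ∈ Icc t₀ T, ∀ p, 0 ≤ f n t p)
    (hfcont : ∀ n, ContinuousOn (fun tp : ℝ × V3 => f n tp.1 tp.2) (Icc t₀ T ×ˢ univ))
    (hfinit : ∀ n p, f (n + 1) t₀ p = f₀ p)
    (hfode : ∀ n, ∀ t ∈ Icc t₀ T, ∀ p,
      HasDerivWithinAt (fun s => f (n + 1) s p)
        (-(lamEta (g t) (k t) γ η (Zeta γ η t) p) * f (n + 1) t p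
          + GammaIter (g t) (Zeta γ η t) b (f n t) (f (n + 1) t p) p)
        (Icc t₀ T) t) :
    ∀ C₂ : ℝ, 1 < C₂ → ∃ T₁, t₀ < T₁ ∧ T₁ ≤ T ∧
      ∀ n, ∀ s ∈ Icc t₀ T₁, ∀ p : V3, jap p ^ m * |f n s p| ≤ C₂ * B := by
  exact fun _ hC₂ => stmt10_general hγ hη0 hη1.le hb0 hb3.le (one_pos.trans_le hc₁) hT hm hgsymm
    hgbound hH hF hf₀B hfz hfpos hfinit hfode hC₂
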